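/- Let D ∈ (0, D_max), suppose the rate-distortion function R is differentiable at D, let Q* be a probability mass function on Â with R(P,Q*,D) = R(D), and let λ* < 0 satisfy λ*·D − Λ_{P,Q*}(λ*) = (ln 2)·R(D). Then λ* = (ln 2)·R'(D). -/

import Mathlib

open Real MeasureTheory Finset
open scoped Classical

/-- `Q` is a probability mass function on `Fin k`. -/
def IsPmf {k : ℕ} (Q : Fin k → ℝ) : Prop := (∀ j, 0 ≤ Q j) ∧ ∑ j, Q j = 1

/-- `Λ_{P,Q}(λ) = E_P[ln Σ_j Q_j e^{λ ρ(X,a_j)}]`. -/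
noncomputable def Lam {k : ℕ} (P : Measure ℝ) (ρ : ℝ → Fin k → ℝ)
    (Q : Fin k → ℝ) (l : ℝ) : ℝ :=
  ∫ x, Real.log (∑ j, Q j * Real.exp (l * ρ x j)) ∂P

/-- The cost `∫ Σ_j W(x)({a_j}) log₂ (W(x)({a_j}) / Q_j) dP(x)` of a Markov kernel,
with the conventions `0 · log 0 = 0` (automatic in Lean) and value `⊤` if on a set of
positive `P`-measure `w x j > 0` for some `j` with `Q j = 0`. -/
noncomputable def wCost {k : ℕ} (P : Measure ℝ) (Q : Fin k → ℝ)
    (w : ℝ → Fin k → ℝ) : EReal :=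
  if ∀ᵐ x ∂P, ∀ j, 0 < w x j → 0 < Q j then
    ((∫ x, ∑ j, w x j * Real.logb 2 (w x j / Q j) ∂P : ℝ) : EReal)
  else ⊤

/-- `R(P,Q,D)`: infimum over Markov kernels `w` from `ℝ` to `Fin k` with
`∫ Σ_j w x j ρ(x,a_j) dP ≤ D` of the relative-entropy cost. -/
noncomputable def RPQ {k : ℕ} (P : Measure ℝ) (ρ : ℝ → Fin k → ℝ)
    (Q : Fin k → ℝ) (D : ℝ) : EReal :=
  ⨅ w ∈ {w : ℝ → Fin k → ℝ | Measurable w ∧ (∀ x j, 0 ≤ w x j) ∧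
      (∀ x, ∑ j, w x j = 1) ∧ ∫ x, ∑ j, w x j * ρ x j ∂P ≤ D}, wCost P Q w

/-- The rate-distortion function `R(D) = inf_Q R(P,Q,D)`. -/
noncomputable def RofD {k : ℕ} (P : Measure ℝ) (ρ : ℝ → Fin k → ℝ) (D : ℝ) : EReal :=
  ⨅ Q ∈ {Q : Fin k → ℝ | IsPmf Q}, RPQ P ρ Q D

/-- `D_max = min_j E_P[ρ(X,a_j)]`. -/
noncomputable def Dmax {k : ℕ} (P : Measure ℝ) (ρ : ℝ → Fin k → ℝ) : ℝ :=
  sInf (Set.range fun j => ∫ x, ρ x j ∂P)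

/-- `D_min^{P,Q} = E_P[min_{a ∈ supp Q} ρ(X,a)]`. -/
noncomputable def DminPQ {k : ℕ} (P : Measure ℝ) (ρ : ℝ → Fin k → ℝ)
    (Q : Fin k → ℝ) : ℝ :=
  ∫ x, (⨅ j : {j : Fin k // 0 < Q j}, ρ x (j : Fin k)) ∂P

/-- `D_max^{P,Q} = Σ_j Q_j · E_P[ρ(X,a_j)]`. -/
noncomputable def DmaxPQ {k : ℕ} (P : Measure ℝ) (ρ : ℝ → Fin k → ℝ)
    (Q : Fin k → ℝ) : ℝ :=
  ∑ j, Q j * ∫ x, ρ x j ∂P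

/-- The Fenchel–Legendre transform `Λ*_{P,Q}(D) = sup_{λ ≤ 0} [λ·D − Λ_{P,Q}(λ)]`. -/
noncomputable def LamStar {k : ℕ} (P : Measure ℝ) (ρ : ℝ → Fin k → ℝ)
    (Q : Fin k → ℝ) (D : ℝ) : EReal :=
  ⨆ l ∈ Set.Iic (0 : ℝ), ((l * D - Lam P ρ Q l : ℝ) : EReal)

open Filter Topology

/-- The partition function. -/
noncomputable def Zf {k : ℕ} (ρ : ℝ → Fin k → ℝ) (Q : Fin k → ℝ) (l : ℝ) (x : ℝ) : ℝ :=
  ∑ j, Q j * Real.exp (l * ρ x j)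

/-- The Gibbs kernel. -/
noncomputable def Gf {k : ℕ} (ρ : ℝ → Fin k → ℝ) (Q : Fin k → ℝ) (l : ℝ) (x : ℝ)
    (j : Fin k) : ℝ := Q j * Real.exp (l * ρ x j) / Zf ρ Q l x

/-- Pointwise mean distortion under the Gibbs kernel. -/
noncomputable def mx {k : ℕ} (ρ : ℝ → Fin k → ℝ) (Q : Fin k → ℝ) (l : ℝ) (x : ℝ) : ℝ :=
  ∑ j, Gf ρ Q l x j * ρ x j

lemma pmf_exists_pos {k : ℕ} {Q : Fin k → ℝ} (hQ : IsPmf Q) : ∃ j, 0 < Q j := by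
  by_contra! h
  have : ∑ j, Q j ≤ 0 := Finset.sum_nonpos fun j _ => h j
  linarith [hQ.2]

lemma pmf_le_one {k : ℕ} {Q : Fin k → ℝ} (h0 : ∀ j, 0 ≤ Q j) (h1 : ∑ j, Q j = 1) (j : Fin k) :
    Q j ≤ 1 := by
  rw [← h1]
  exact Finset.single_le_sum (fun i _ => h0 i) (Finset.mem_univ j)

lemma Zf_pos {k : ℕ} (ρ : ℝ → Fin k → ℝ) {Q : Fin k → ℝ} (hQ : IsPmf Q) (l x : ℝ) :
    0 < Zf ρ Q l x := by
  obtain ⟨j, hj⟩ := pmf_exists_pos hQ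
  exact Finset.sum_pos' (fun i _ => mul_nonneg (hQ.1 i) (Real.exp_pos _).le)
    ⟨j, Finset.mem_univ j, mul_pos hj (Real.exp_pos _)⟩

lemma Gf_nonneg {k : ℕ} (ρ : ℝ → Fin k → ℝ) {Q : Fin k → ℝ} (hQ : IsPmf Q) (l x : ℝ)
    (j : Fin k) : 0 ≤ Gf ρ Q l x j :=
  div_nonneg (mul_nonneg (hQ.1 j) (Real.exp_pos _).le) (Zf_pos ρ hQ l x).le

lemma Gf_pos {k : ℕ} (ρ : ℝ → Fin k → ℝ) {Q : Fin k → ℝ} (hQ : IsPmf Q) (l x : ℝ)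
    (j : Fin k) (hj : 0 < Q j) : 0 < Gf ρ Q l x j :=
  div_pos (mul_pos hj (Real.exp_pos _)) (Zf_pos ρ hQ l x)

lemma Gf_sum {k : ℕ} (ρ : ℝ → Fin k → ℝ) {Q : Fin k → ℝ} (hQ : IsPmf Q) (l x : ℝ) :
    ∑ j, Gf ρ Q l x j = 1 := by
  unfold Gf
  rw [← Finset.sum_div]
  exact div_self (Zf_pos ρ hQ l x).ne'

lemma Zf_meas {k : ℕ} {ρ : ℝ → Fin k → ℝ} (hρ : ∀ j, Measurable fun x => ρ x j)
    (Q : Fin k → ℝ) (l : ℝ) : Measurable (Zf ρ Q l) := by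
  unfold Zf
  refine Finset.measurable_fun_sum _ fun j _ => ?_
  exact (Real.measurable_exp.comp ((hρ j).const_mul l)).const_mul _

lemma Gf_meas {k : ℕ} {ρ : ℝ → Fin k → ℝ} (hρ : ∀ j, Measurable fun x => ρ x j)
    (Q : Fin k → ℝ) (l : ℝ) (j : Fin k) : Measurable (fun x => Gf ρ Q l x j) := by
  unfold Gf
  exact ((Real.measurable_exp.comp ((hρ j).const_mul l)).const_mul _).div (Zf_meas hρ Q l)

lemma mx_meas {k : ℕ} {ρ : ℝ → Fin k → ℝ} (hρ : ∀ j, Measurable fun x => ρ x j)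
    (Q : Fin k → ℝ) (l : ℝ) : Measurable (mx ρ Q l) := by
  unfold mx
  exact Finset.measurable_fun_sum _ fun j _ => (Gf_meas hρ Q l j).mul (hρ j)

/-- average of values in `[0,M]` is bounded by `M`. -/
lemma avg_bound {k : ℕ} {w r : Fin k → ℝ} {M : ℝ} (h0 : ∀ j, 0 ≤ w j) (h1 : ∑ j, w j = 1)
    (hr : ∀ j, 0 ≤ r j ∧ r j ≤ M) : ‖∑ j, w j * r j‖ ≤ M := by
  have a : 0 ≤ ∑ j, w j * r j := Finset.sum_nonneg fun j _ => mul_nonneg (h0 j) (hr j).1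
  rw [Real.norm_of_nonneg a]
  calc ∑ j, w j * r j ≤ ∑ j, w j * M :=
        Finset.sum_le_sum fun j _ => mul_le_mul_of_nonneg_left (hr j).2 (h0 j)
    _ = M := by rw [← Finset.sum_mul, h1, one_mul]

lemma logZ_bound {k : ℕ} {ρ : ℝ → Fin k → ℝ} {Q : Fin k → ℝ} (hQ : IsPmf Q) {M l x : ℝ}
    (hr : ∀ j, 0 ≤ ρ x j ∧ ρ x j ≤ M) : ‖Real.log (Zf ρ Q l x)‖ ≤ |l| * M := by
  have key : ∀ j, |l * ρ x j| ≤ |l| * M := fun j => by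
    rw [abs_mul, abs_of_nonneg (hr j).1]
    exact mul_le_mul_of_nonneg_left (hr j).2 (abs_nonneg _)
  have up : Zf ρ Q l x ≤ Real.exp (|l| * M) := by
    calc Zf ρ Q l x ≤ ∑ j, Q j * Real.exp (|l| * M) :=
          Finset.sum_le_sum fun j _ => mul_le_mul_of_nonneg_left
            (Real.exp_le_exp.2 ((le_abs_self _).trans (key j))) (hQ.1 j)
      _ = _ := by rw [← Finset.sum_mul, hQ.2, one_mul]
  have lo : Real.exp (-(|l| * M)) ≤ Zf ρ Q l x := by
    calc Real.exp (-(|l| * M)) = ∑ j, Q j * Real.exp (-(|l| * M)) := by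
          rw [← Finset.sum_mul, hQ.2, one_mul]
      _ ≤ _ := Finset.sum_le_sum fun j _ => mul_le_mul_of_nonneg_left
            (Real.exp_le_exp.2 (by linarith [neg_abs_le (l * ρ x j), key j])) (hQ.1 j)
  have hZ := Zf_pos ρ hQ l x
  rw [Real.norm_eq_abs, abs_le]
  exact ⟨(Real.le_log_iff_exp_le hZ).2 lo, (Real.log_le_iff_le_exp hZ).2 up⟩

section
variable {k : ℕ} {P : Measure ℝ} [IsProbabilityMeasure P] {M : ℝ} {ρ : ℝ → Fin k → ℝ}

lemma logZ_int (hm : ∀ j, Measurable fun x => ρ x j)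
    (hb : ∀ᵐ x ∂P, ∀ j, 0 ≤ ρ x j ∧ ρ x j ≤ M) {Q : Fin k → ℝ} (hQ : IsPmf Q) (l : ℝ) :
    Integrable (fun x => Real.log (Zf ρ Q l x)) P :=
  Integrable.of_bound (Real.measurable_log.comp (Zf_meas hm Q l)).aestronglyMeasurable (|l| * M)
    (hb.mono fun _ hx => logZ_bound hQ hx)

lemma avg_int (hm : ∀ j, Measurable fun x => ρ x j)
    (hb : ∀ᵐ x ∂P, ∀ j, 0 ≤ ρ x j ∧ ρ x j ≤ M) {w : ℝ → Fin k → ℝ} (hw : Measurable w)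
    (h0 : ∀ x j, 0 ≤ w x j) (h1 : ∀ x, ∑ j, w x j = 1) :
    Integrable (fun x => ∑ j, w x j * ρ x j) P :=
  Integrable.of_bound (Finset.measurable_fun_sum _ fun j _ =>
    ((measurable_pi_apply j).comp hw).mul (hm j)).aestronglyMeasurable M
    (hb.mono fun x hx => avg_bound (h0 x) (h1 x) hx)

lemma Gf_meas' (hm : ∀ j, Measurable fun x => ρ x j) (Q : Fin k → ℝ) (l : ℝ) :
    Measurable (Gf ρ Q l) := measurable_pi_lambda _ fun j => Gf_meas hm Q l j

lemma mx_int (hm : ∀ j, Measurable fun x => ρ x j)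
    (hb : ∀ᵐ x ∂P, ∀ j, 0 ≤ ρ x j ∧ ρ x j ≤ M) {Q : Fin k → ℝ} (hQ : IsPmf Q) (l : ℝ) :
    Integrable (mx ρ Q l) P :=
  avg_int hm hb (Gf_meas' hm Q l) (Gf_nonneg ρ hQ l) (Gf_sum ρ hQ l)

lemma cost_int {Q : Fin k → ℝ} {w : ℝ → Fin k → ℝ} (hw : Measurable w)
    (h0 : ∀ x j, 0 ≤ w x j) (h1 : ∀ x, ∑ j, w x j = 1)
    (hac : ∀ᵐ x ∂P, ∀ j, 0 < w x j → 0 < Q j) :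
    Integrable (fun x => ∑ j, w x j * Real.log (w x j / Q j)) P := by
  refine integrable_finset_sum _ fun j _ => ?_
  have hwj : Measurable fun x => w x j := (measurable_pi_apply j).comp hw
  refine Integrable.of_bound (hwj.mul (Real.measurable_log.comp
    (hwj.div_const _))).aestronglyMeasurable (1 + |Real.log (Q j)|) (hac.mono fun x hx => ?_)
  rcases (h0 x j).eq_or_lt with h | h
  · simp only [← h, zero_mul, norm_zero]; positivity
  · have hw1 := pmf_le_one (h0 x) (h1 x) j
    rw [Real.log_div h.ne' (hx j h).ne', mul_sub, Real.norm_eq_abs]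
    refine (abs_sub _ _).trans (add_le_add ?_ ?_)
    · rw [mul_comm]; exact (Real.abs_log_mul_self_lt _ h hw1).le
    · rw [abs_mul, abs_of_pos h]
      exact mul_le_of_le_one_left (abs_nonneg _) hw1

/-- Pointwise weak duality. -/
lemma weak_pt {Q : Fin k → ℝ} (hQ : IsPmf Q) (l x : ℝ) {w : Fin k → ℝ}
    (h0 : ∀ j, 0 ≤ w j) (h1 : ∑ j, w j = 1) (hac : ∀ j, 0 < w j → 0 < Q j) :
    l * (∑ j, w j * ρ x j) - Real.log (Zf ρ Q l x) ≤ ∑ j, w j * Real.log (w j / Q j) := by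
  have hZ := Zf_pos ρ hQ l x
  have key : ∀ j, w j * (l * ρ x j - Real.log (Zf ρ Q l x)) + (w j - Gf ρ Q l x j) ≤
      w j * Real.log (w j / Q j) := by
    intro j
    rcases (h0 j).eq_or_lt with h | h
    · have := Gf_nonneg ρ hQ l x j
      simp only [← h, zero_mul]; linarith
    · have hq := hac j h
      have hG := Gf_pos ρ hQ l x j hq
      have e := Real.log_le_sub_one_of_pos (div_pos hG h)
      have e2 : Real.log (Gf ρ Q l x j) =
          Real.log (Q j) + l * ρ x j - Real.log (Zf ρ Q l x) := by
        unfold Gf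
        rw [Real.log_div (mul_pos hq (Real.exp_pos _)).ne' hZ.ne',
          Real.log_mul hq.ne' (Real.exp_pos _).ne', Real.log_exp]
      rw [Real.log_div hG.ne' h.ne', e2] at e
      rw [Real.log_div h.ne' hq.ne']
      have e3 := mul_le_mul_of_nonneg_left e h.le
      have e4 : w j * (Gf ρ Q l x j / w j - 1) = Gf ρ Q l x j - w j := by
        field_simp
      nlinarith
  have := Finset.sum_le_sum (s := Finset.univ) fun j _ => key j
  refine le_trans (le_of_eq ?_) this
  rw [Finset.sum_add_distrib, Finset.sum_sub_distrib, h1, Gf_sum ρ hQ l x, sub_self, add_zero]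
  simp only [mul_sub, Finset.sum_sub_distrib]
  rw [← Finset.sum_mul, h1, one_mul, Finset.mul_sum]
  congr 1
  exact Finset.sum_congr rfl fun j _ => by ring

lemma cost_eq {Q : Fin k → ℝ} (w : ℝ → Fin k → ℝ) :
    ∫ x, ∑ j, w x j * Real.logb 2 (w x j / Q j) ∂P =
      (∫ x, ∑ j, w x j * Real.log (w x j / Q j) ∂P) / Real.log 2 := by
  rw [← integral_div]
  refine integral_congr_ae (ae_of_all _ fun x => ?_)
  simp only [Real.logb, Finset.sum_div, mul_div_assoc]

lemma weak_RPQ (hm : ∀ j, Measurable fun x => ρ x j)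
    (hb : ∀ᵐ x ∂P, ∀ j, 0 ≤ ρ x j ∧ ρ x j ≤ M) {Q : Fin k → ℝ} (hQ : IsPmf Q)
    {l : ℝ} (hl : l ≤ 0) (D : ℝ) :
    (((l * D - Lam P ρ Q l) / Real.log 2 : ℝ) : EReal) ≤ RPQ P ρ Q D := by
  have hL : 0 < Real.log 2 := Real.log_pos one_lt_two
  unfold RPQ
  refine le_iInf₂ fun w hw => ?_
  obtain ⟨hwm, h0, h1, hD⟩ := hw
  unfold wCost
  split_ifs with hac
  · rw [EReal.coe_le_coe_iff, cost_eq]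
    refine div_le_div_of_nonneg_right ?_ hL.le
    have i1 := avg_int hm hb hwm h0 h1
    have i2 := logZ_int hm hb hQ l
    calc l * D - Lam P ρ Q l ≤ l * (∫ x, ∑ j, w x j * ρ x j ∂P) - Lam P ρ Q l := by
          nlinarith
      _ = ∫ x, (l * (∑ j, w x j * ρ x j) - Real.log (Zf ρ Q l x)) ∂P := by
          rw [integral_sub (i1.const_mul l) i2, integral_const_mul]; rfl
      _ ≤ _ := integral_mono_ae ((i1.const_mul l).sub i2) (cost_int hwm h0 h1 hac)
          (hac.mono fun x hx => weak_pt hQ l x (h0 x) (h1 x) hx)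
  · exact le_top

lemma RofD_nonneg (hm : ∀ j, Measurable fun x => ρ x j)
    (hb : ∀ᵐ x ∂P, ∀ j, 0 ≤ ρ x j ∧ ρ x j ≤ M) (D : ℝ) : 0 ≤ RofD P ρ D := by
  unfold RofD
  refine le_iInf₂ fun Q hQ => ?_
  have := weak_RPQ (P := P) hm hb (Q := Q) hQ le_rfl D
  have e : (0 * D - Lam P ρ Q 0) / Real.log 2 = 0 := by
    have hQ' : ∑ j, Q j = 1 := hQ.2
    simp [Lam, hQ']
  rw [e] at this
  exact_mod_cast this

lemma RofD_le (hm : ∀ j, Measurable fun x => ρ x j)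
    (hb : ∀ᵐ x ∂P, ∀ j, 0 ≤ ρ x j ∧ ρ x j ≤ M) {Q : Fin k → ℝ} (hQ : IsPmf Q) (l : ℝ) :
    RofD P ρ (∫ x, mx ρ Q l x ∂P) ≤
      (((l * (∫ x, mx ρ Q l x ∂P) - Lam P ρ Q l) / Real.log 2 : ℝ) : EReal) := by
  unfold RofD
  refine (iInf₂_le Q hQ).trans ?_
  unfold RPQ
  refine (iInf₂_le (Gf ρ Q l) ⟨Gf_meas' hm Q l, Gf_nonneg ρ hQ l, Gf_sum ρ hQ l,
    le_rfl⟩).trans ?_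
  have hac : ∀ x j, 0 < Gf ρ Q l x j → 0 < Q j := by
    intro x j h
    rcases (hQ.1 j).eq_or_lt with h' | h'
    · simp [Gf, ← h'] at h
    · exact h'
  unfold wCost
  rw [if_pos (ae_of_all _ hac), EReal.coe_le_coe_iff, cost_eq]
  refine le_of_eq ?_
  congr 1
  rw [← integral_const_mul]
  change _ = _ - ∫ x, Real.log (Zf ρ Q l x) ∂P
  rw [← integral_sub ((mx_int hm hb hQ l).const_mul l) (logZ_int hm hb hQ l)]
  refine integral_congr_ae (ae_of_all _ fun x => ?_)
  have hZ := Zf_pos ρ hQ l x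
  have key : ∀ j, Gf ρ Q l x j * Real.log (Gf ρ Q l x j / Q j) =
      l * (Gf ρ Q l x j * ρ x j) - Gf ρ Q l x j * Real.log (Zf ρ Q l x) := by
    intro j
    rcases (hQ.1 j).eq_or_lt with h' | h'
    · simp [Gf, ← h']
    · have : Gf ρ Q l x j / Q j = Real.exp (l * ρ x j) / Zf ρ Q l x := by
        unfold Gf; field_simp
      rw [this, Real.log_div (Real.exp_pos _).ne' hZ.ne', Real.log_exp]
      ring
  simp only [key, Finset.sum_sub_distrib]
  rw [← Finset.sum_mul, Gf_sum ρ hQ l x, one_mul, ← Finset.mul_sum]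
  rfl

/-- Pointwise convexity of `log Z` with the equality case. -/
lemma conv_pt {Q : Fin k → ℝ} (hQ : IsPmf Q) (l t x : ℝ) :
    (l - t) * mx ρ Q t x ≤ Real.log (Zf ρ Q l x) - Real.log (Zf ρ Q t x) ∧
    ((l - t) * mx ρ Q t x = Real.log (Zf ρ Q l x) - Real.log (Zf ρ Q t x) → l ≠ t →
      ∀ j, 0 < Q j → ρ x j = mx ρ Q t x) := by
  have hZ := Zf_pos ρ hQ l x
  have hZt := Zf_pos ρ hQ t x
  set m := mx ρ Q t x with hmdef
  have e1 : Zf ρ Q l x / Zf ρ Q t x * Real.exp (-((l - t) * m)) =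
      ∑ j, Gf ρ Q t x j * Real.exp ((l - t) * (ρ x j - m)) := by
    conv_lhs => rw [Zf]
    rw [Finset.sum_div, Finset.sum_mul]
    refine Finset.sum_congr rfl fun j _ => ?_
    have : Real.exp (l * ρ x j) * Real.exp (-((l - t) * m)) =
        Real.exp (t * ρ x j) * Real.exp ((l - t) * (ρ x j - m)) := by
      rw [← Real.exp_add, ← Real.exp_add]; congr 1; ring
    unfold Gf
    rw [div_mul_eq_mul_div, div_mul_eq_mul_div, mul_assoc, this, mul_assoc]
  have e2 : ∑ j, Gf ρ Q t x j * ((l - t) * (ρ x j - m) + 1) = 1 := by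
    have : ∀ j, Gf ρ Q t x j * ((l - t) * (ρ x j - m) + 1) =
      (l - t) * (Gf ρ Q t x j * ρ x j) - Gf ρ Q t x j * ((l - t) * m) + Gf ρ Q t x j :=
      fun j => by ring
    simp only [this, Finset.sum_add_distrib, Finset.sum_sub_distrib]
    rw [← Finset.sum_mul, ← Finset.mul_sum, Gf_sum ρ hQ t x]
    change (l - t) * m - _ + 1 = 1
    ring
  have hle : ∀ j ∈ Finset.univ, Gf ρ Q t x j * ((l - t) * (ρ x j - m) + 1) ≤
      Gf ρ Q t x j * Real.exp ((l - t) * (ρ x j - m)) := fun j _ =>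
    mul_le_mul_of_nonneg_left (Real.add_one_le_exp _) (Gf_nonneg ρ hQ t x j)
  have e3 : Real.log (Zf ρ Q l x / Zf ρ Q t x * Real.exp (-((l - t) * m))) =
      Real.log (Zf ρ Q l x) - Real.log (Zf ρ Q t x) - (l - t) * m := by
    rw [Real.log_mul (div_pos hZ hZt).ne' (Real.exp_pos _).ne', Real.log_exp,
      Real.log_div hZ.ne' hZt.ne']; ring
  have hpos : 0 < Zf ρ Q l x / Zf ρ Q t x * Real.exp (-((l - t) * m)) :=
    mul_pos (div_pos hZ hZt) (Real.exp_pos _)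
  constructor
  · have : 1 ≤ Zf ρ Q l x / Zf ρ Q t x * Real.exp (-((l - t) * m)) := by
      rw [e1, ← e2]; exact Finset.sum_le_sum hle
    have := Real.log_nonneg this
    rw [e3] at this; linarith
  · intro h hne j hj
    have hlog : Real.log (Zf ρ Q l x / Zf ρ Q t x * Real.exp (-((l - t) * m))) = 0 := by
      rw [e3]; linarith
    have h1 := Real.eq_one_of_pos_of_log_eq_zero hpos hlog
    rw [e1, ← e2] at h1
    have h2 := (Finset.sum_eq_sum_iff_of_le hle).1 h1.symm j (Finset.mem_univ j)
    have h3 := mul_left_cancel₀ (Gf_pos ρ hQ t x j hj).ne' h2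
    by_contra hc
    have : (l - t) * (ρ x j - m) ≠ 0 := mul_ne_zero (sub_ne_zero.2 hne) (sub_ne_zero.2 hc)
    exact absurd h3 (Real.add_one_lt_exp this).ne

lemma m_cont (hm : ∀ j, Measurable fun x => ρ x j)
    (hb : ∀ᵐ x ∂P, ∀ j, 0 ≤ ρ x j ∧ ρ x j ≤ M) {Q : Fin k → ℝ} (hQ : IsPmf Q) :
    Continuous fun l => ∫ x, mx ρ Q l x ∂P := by
  refine continuous_of_dominated (bound := fun _ => M)
    (fun l => (mx_meas hm Q l).aestronglyMeasurable)
    (fun l => hb.mono fun x hx => avg_bound (Gf_nonneg ρ hQ l x) (Gf_sum ρ hQ l x) hx)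
    (integrable_const _) (ae_of_all _ fun x => ?_)
  unfold mx Gf
  refine continuous_finset_sum _ fun j _ => Continuous.mul (Continuous.div (by fun_prop) ?_
    fun l => (Zf_pos ρ hQ l x).ne') continuous_const
  unfold Zf
  fun_prop

end


/-- **Lemma 2(ii).** If `R` is differentiable at `D ∈ (0, D_max)`, `Q*` achieves
`R(P,Q*,D) = R(D)`, and `λ* < 0` satisfies `λ*·D − Λ_{P,Q*}(λ*) = (ln 2)·R(D)`,
then `λ* = (ln 2)·R'(D)`. -/
theorem stmt_16 {k : ℕ} (hk : 0 < k) (A : Set ℝ) (hA : MeasurableSet A)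
    (P : Measure ℝ) [IsProbabilityMeasure P] (hsupp : P Aᶜ = 0)
    (M : ℝ) (ρ : ℝ → Fin k → ℝ) (hρmeas : ∀ j, Measurable fun x => ρ x j)
    (hρnn : ∀ x ∈ A, ∀ j, 0 ≤ ρ x j) (hρM : ∀ x ∈ A, ∀ j, ρ x j ≤ M)
    (hρmin : ∀ x ∈ A, ∃ j, ρ x j = 0)
    (hDmax : 0 < Dmax P ρ)
    (D : ℝ) (hD : D ∈ Set.Ioo 0 (Dmax P ρ))
    (hdiff : DifferentiableAt ℝ (fun t => (RofD P ρ t).toReal) D)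
    (Q : Fin k → ℝ) (hQ : IsPmf Q) (hQopt : RPQ P ρ Q D = RofD P ρ D)
    (l : ℝ) (hl : l < 0)
    (heq : ((l * D - Lam P ρ Q l : ℝ) : EReal) = (Real.log 2 : EReal) * RofD P ρ D) :
    l = Real.log 2 * deriv (fun t => (RofD P ρ t).toReal) D := by
  have hL : 0 < Real.log 2 := Real.log_pos one_lt_two
  have hb : ∀ᵐ x ∂P, ∀ j, 0 ≤ ρ x j ∧ ρ x j ≤ M := by
    have : ∀ᵐ x ∂P, x ∈ A := by rw [ae_iff]; exact hsupp
    exact this.mono fun x hx j => ⟨hρnn x hx j, hρM x hx j⟩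
  have hm := hρmeas
  set g : ℝ → ℝ := fun t => (RofD P ρ t).toReal with hg
  set m : ℝ → ℝ := fun t => ∫ x, mx ρ Q t x ∂P with hmdef
  -- finiteness at D
  have hbot : ∀ t, RofD P ρ t ≠ ⊥ := fun t h => by
    have := RofD_nonneg (P := P) hm hb t
    rw [h] at this
    exact absurd this (not_le.2 EReal.bot_lt_zero)
  have htop : RofD P ρ D ≠ ⊤ := fun h => by
    rw [h, EReal.coe_mul_top_of_pos hL] at heq
    exact EReal.coe_ne_top _ heq
  have hgD : ((g D : ℝ) : EReal) = RofD P ρ D := EReal.coe_toReal htop (hbot D)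
  have heq' : l * D - Lam P ρ Q l = Real.log 2 * g D := by
    rw [← hgD] at heq
    exact_mod_cast heq
  have hmax : ∀ t ≤ 0, t * D - Lam P ρ Q t ≤ l * D - Lam P ρ Q l := by
    intro t ht
    have := weak_RPQ (P := P) hm hb hQ ht D
    rw [hQopt, ← hgD, EReal.coe_le_coe_iff, div_le_iff₀ hL] at this
    linarith
  have hup : ∀ t, Real.log 2 * g (m t) ≤ t * m t - Lam P ρ Q t := by
    intro t
    have h1 := RofD_le (P := P) hm hb hQ t
    have h2 := EReal.toReal_le_toReal h1 (hbot _) (EReal.coe_ne_top _)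
    rw [EReal.toReal_coe, le_div_iff₀ hL] at h2
    change g (m t) * _ ≤ _ at h2
    linarith
  have hint : ∀ t, Integrable (fun x => (l - t) * mx ρ Q t x) P := fun t =>
    (mx_int hm hb hQ t).const_mul _
  have hint2 : ∀ t, Integrable
      (fun x => Real.log (Zf ρ Q l x) - Real.log (Zf ρ Q t x)) P := fun t =>
    (logZ_int hm hb hQ l).sub (logZ_int hm hb hQ t)
  have hI1 : ∀ t, ∫ x, (l - t) * mx ρ Q t x ∂P = (l - t) * m t := fun t =>
    integral_const_mul _ _
  have hI2 : ∀ t, ∫ x, (Real.log (Zf ρ Q l x) - Real.log (Zf ρ Q t x)) ∂P =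
      Lam P ρ Q l - Lam P ρ Q t := fun t =>
    integral_sub (logZ_int hm hb hQ l) (logZ_int hm hb hQ t)
  have hconv : ∀ t, (l - t) * m t ≤ Lam P ρ Q l - Lam P ρ Q t := by
    intro t
    rw [← hI1, ← hI2]
    exact integral_mono (hint t) (hint2 t) fun x => (conv_pt hQ l t x).1
  have hne : ∀ t ≤ 0, t ≠ l → m t ≠ D := by
    intro t ht htl hmt
    have h1 := hconv t
    have h2 := hmax t ht
    have h3 : (l - t) * m t = Lam P ρ Q l - Lam P ρ Q t := by
      refine le_antisymm h1 ?_
      rw [hmt]; linarith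
    rw [← hI1, ← hI2] at h3
    have h4 := (integral_eq_iff_of_ae_le (hint t) (hint2 t)
      (ae_of_all _ fun x => (conv_pt hQ l t x).1)).1 h3
    obtain ⟨j, hj⟩ := pmf_exists_pos hQ
    have h5 : ∫ x, ρ x j ∂P = m t := by
      refine integral_congr_ae (h4.mono fun x hx => ?_)
      exact (conv_pt hQ l t x).2 hx htl.symm j hj
    have h6 : Dmax P ρ ≤ ∫ x, ρ x j ∂P :=
      csInf_le (Set.finite_range _).bddBelow ⟨j, rfl⟩
    have := hD.2
    linarith
  have hgt : ∀ t ≤ 0, l < t → D < m t := by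
    intro t ht hlt
    refine lt_of_le_of_ne ?_ (hne t ht hlt.ne').symm
    have h1 := hconv t
    have h2 := hmax t ht
    by_contra! hc
    nlinarith
  have hlt : ∀ t, t < l → m t < D := by
    intro t hlt
    have ht : t ≤ 0 := (hlt.trans hl).le
    refine lt_of_le_of_ne ?_ (hne t ht hlt.ne)
    have h1 := hconv t
    have h2 := hmax t ht
    by_contra! hc
    nlinarith
  have hcont : Continuous m := m_cont hm hb hQ
  have hev : ∀ᶠ t in 𝓝[>] l, t < 0 := nhdsWithin_le_nhds (Iio_mem_nhds hl)
  have hmemR : ∀ᶠ t in 𝓝[>] l, l < t := self_mem_nhdsWithin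
  have hmemL : ∀ᶠ t in 𝓝[<] l, t < l := self_mem_nhdsWithin
  have htR : Tendsto m (𝓝[>] l) (𝓝 (m l)) := (hcont.tendsto l).mono_left nhdsWithin_le_nhds
  have htL : Tendsto m (𝓝[<] l) (𝓝 (m l)) := (hcont.tendsto l).mono_left nhdsWithin_le_nhds
  have hml : m l = D := by
    refine le_antisymm (le_of_tendsto htL (hmemL.mono fun t ht => (hlt t ht).le))
      (ge_of_tendsto htR ?_)
    filter_upwards [hev, hmemR] with t h1 h2 using (hgt t h1.le h2).le
  rw [hml] at htR htL
  have hkey : ∀ t ≤ 0, Real.log 2 * (g (m t) - g D) ≤ t * (m t - D) := by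
    intro t ht
    have := hup t
    have := hmax t ht
    nlinarith
  have hslope := hasDerivAt_iff_tendsto_slope.1 hdiff.hasDerivAt
  have hsR : Tendsto (fun t => Real.log 2 * slope g D (m t)) (𝓝[>] l)
      (𝓝 (Real.log 2 * deriv g D)) := by
    refine (hslope.comp (tendsto_nhdsWithin_iff.2 ⟨htR, ?_⟩)).const_mul _
    filter_upwards [hev, hmemR] with t h1 h2 using (hgt t h1.le h2).ne'
  have hsL : Tendsto (fun t => Real.log 2 * slope g D (m t)) (𝓝[<] l)
      (𝓝 (Real.log 2 * deriv g D)) := by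
    refine (hslope.comp (tendsto_nhdsWithin_iff.2 ⟨htL, ?_⟩)).const_mul _
    filter_upwards [hmemL] with t h2 using (hlt t h2).ne
  have hidR : Tendsto (fun t : ℝ => t) (𝓝[>] l) (𝓝 l) := nhdsWithin_le_nhds
  have hidL : Tendsto (fun t : ℝ => t) (𝓝[<] l) (𝓝 l) := nhdsWithin_le_nhds
  refine le_antisymm (le_of_tendsto_of_tendsto hidL hsL ?_) (le_of_tendsto_of_tendsto hsR hidR ?_)
  · filter_upwards [hmemL] with t h2
    have h3 := hlt t h2
    rw [slope_def_field, ← mul_div_assoc, le_div_iff_of_neg (by linarith)]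
    exact hkey t (h2.trans hl).le
  · filter_upwards [hev, hmemR] with t h1 h2
    have h3 := hgt t h1.le h2
    rw [slope_def_field, ← mul_div_assoc, div_le_iff₀ (by linarith)]
    exact hkey t h1.le
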